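/- Let α, β ∈ (1,2), N_x, N_y ≥ 1, η_α, η_β > 0, and N = N_x·N_y. Set J_{α,β} = η_α (I_{N_y} ⊗ A_α) + η_β (A_β ⊗ I_{N_x}) and P_τ = I_N + η_α (I_{N_y} ⊗ P_α) + η_β (P_β ⊗ I_{N_x}), where P_γ = Q_γ·τ(Â_γ). Then for every nonzero v ∈ ℝ^N, (3/8)·vᵀ P_τ v < vᵀ (I_N + J_{α,β}) v < 2·vᵀ P_τ v; consequently every eigenvalue λ of P_τ^{−1}(I_N + J_{α,β}) satisfies 3/8 < λ < 2, uniformly in N_x, N_y, η_α, η_β. -/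

import Mathlib

open Matrix Kronecker

/-- The fourth-order coefficients `s_k^{(γ)}`. -/
noncomputable def sCoef (γ : ℝ) (k : ℤ) : ℝ :=
  ((-1 : ℝ) ^ k * Real.Gamma (γ + 1) /
      (Real.Gamma (γ / 2 - k + 1) * Real.Gamma (γ / 2 + k + 1))) *
    (1 + γ * (γ + 1) * (γ + 2) / (6 * (γ - 2 * k + 2) * (γ + 2 * k + 2)))

/-- `A_γ`: the symmetric Toeplitz matrix with `(i,j)` entry `s_{i-j}^{(γ)}`. -/
noncomputable def Amat (γ : ℝ) (N : ℕ) : Matrix (Fin N) (Fin N) ℝ :=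
  fun i j => sCoef γ ((i : ℤ) - (j : ℤ))

/-- The second-order coefficients `g_k^{(γ)}`. -/
noncomputable def gCoef (γ : ℝ) (k : ℤ) : ℝ :=
  (-1 : ℝ) ^ k * Real.Gamma (γ + 1) /
    (Real.Gamma (γ / 2 - k + 1) * Real.Gamma (γ / 2 + k + 1))

/-- `Â_γ`: the symmetric Toeplitz matrix with `(i,j)` entry `g_{i-j}^{(γ)}`. -/
noncomputable def Ahat (γ : ℝ) (N : ℕ) : Matrix (Fin N) (Fin N) ℝ :=
  fun i j => gCoef γ ((i : ℤ) - (j : ℤ))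

/-- τ part of the symmetric Toeplitz matrix with first column `t 0, …, t (N-1)`:
with 1-based indices `i, j ∈ {1,…,N}` (here `i.val + 1`, `j.val + 1`) and the
convention `t m = 0` for `m ≥ N`, the `(i,j)` entry is
`t |i-j| - t (i+j) - t (2(N+1)-i-j)`. -/
noncomputable def tauOf (N : ℕ) (t : ℕ → ℝ) : Matrix (Fin N) (Fin N) ℝ :=
  fun i j =>
    (fun m => if m < N then t m else 0) ((i : ℤ) - (j : ℤ)).natAbs -
    (fun m => if m < N then t m else 0) (((i : ℕ) + 1) + ((j : ℕ) + 1)) -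
    (fun m => if m < N then t m else 0) (2 * (N + 1) - ((i : ℕ) + 1) - ((j : ℕ) + 1))

/-- `τ(Â_γ)`. -/
noncomputable def tauAhat (γ : ℝ) (N : ℕ) : Matrix (Fin N) (Fin N) ℝ :=
  tauOf N (fun m => gCoef γ (m : ℤ))

/-- The tridiagonal matrix with `2` on the diagonal and `-1` on the sub/superdiagonals. -/
def triDiag (N : ℕ) : Matrix (Fin N) (Fin N) ℝ :=
  fun i j =>
    if (i : ℤ) = (j : ℤ) then 2
    else if ((i : ℤ) - (j : ℤ)).natAbs = 1 then -1 else 0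

/-- `Q_γ = I_N + (γ/24)·T_N`. -/
noncomputable def Qmat (γ : ℝ) (N : ℕ) : Matrix (Fin N) (Fin N) ℝ :=
  1 + (γ / 24) • triDiag N

/-- `P_γ = Q_γ · τ(Â_γ)`. -/
noncomputable def Pmat (γ : ℝ) (N : ℕ) : Matrix (Fin N) (Fin N) ℝ :=
  Qmat γ N * tauAhat γ N

/-!
Let `T = toeplitz n g` with `g = gCoef γ`, and let `H = T - τ(T)` be its Hankel correction. The
signs and the monotonicity of `g` give `T ≤ H ≤ 0` entrywise off the diagonal, while the rows of
`T + H` have nonnegative sums, so that `T + c H` is diagonally dominant for `-3 ≤ c ≤ 1`. The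
extreme values of `c` say that `τ(T) ≤ 2 T` and `2 T ≤ 3 τ(T)`.

The fourth-order coefficients are `g + (γ / 24) L g` with `L` the negative discrete Laplacian. The
Toeplitz matrix of `L g` lies between `0` and `4 T`, being a congruence of a Toeplitz matrix of size
`n + 1`. The tridiagonal matrix `X` satisfies `0 ≤ X ≤ 4` and commutes with `τ(T)`, hence
`0 ≤ X τ(T) ≤ 4 τ(T)`. As `4 γ / 24 ≤ 1 / 3`, the fourth-order corrections increase `T` and `τ(T)`
by a factor at most `4 / 3`, so that `(3 / 8) P ≤ (1 / 2) τ(T) ≤ T ≤ A ≤ (4 / 3) T ≤ 2 τ(T) ≤ 2 P`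
in one dimension. Kronecker sums inherit the two outer bounds, and the identity summand makes them
strict because `3 / 8 < 1 < 2`.
-/

open Finset
open scoped MatrixOrder

section PositiveSemidefinite

variable {ι κ : Type*}

open scoped ComplexOrder in
lemma posSemidef_of_sum_norm_le_re_diag {𝕜 : Type*} [RCLike 𝕜] [Fintype ι] [DecidableEq ι]
    {A : Matrix ι ι 𝕜} (hA : A.IsHermitian)
    (hdom : ∀ i, ∑ j ∈ univ.erase i, ‖A i j‖ ≤ RCLike.re (A i i)) :
    A.PosSemidef := by
  refine hA.posSemidef_iff_eigenvalues_nonneg.2 fun k => ?_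
  have hk : Module.End.HasEigenvalue (toLin' A) (hA.eigenvalues k : 𝕜) := by
    rw [Module.End.hasEigenvalue_iff_mem_spectrum, spectrum_toLin']
    simpa using (spectrum.algebraMap_mem_iff 𝕜).2 (hA.eigenvalues_mem_spectrum_real k)
  obtain ⟨i, hi⟩ := eigenvalue_mem_ball hk
  rw [Metric.mem_closedBall, dist_comm, dist_eq_norm] at hi
  have hre := (RCLike.re_le_norm _).trans (hi.trans (hdom i))
  simpa using hre

lemma dotProduct_mulVec_lt_of_posDef_sub [Fintype ι] {A B : Matrix ι ι ℝ}
    (h : (B - A).PosDef) {v : ι → ℝ} (hv : v ≠ 0) : v ⬝ᵥ A *ᵥ v < v ⬝ᵥ B *ᵥ v := by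
  simpa [sub_mulVec] using h.dotProduct_mulVec_pos hv

lemma mem_Ioo_of_inv_mul_mulVec_eq_smul [Fintype ι] [DecidableEq ι] {A P : Matrix ι ι ℝ}
    {a b : ℝ} (hab : a < b) (ha : (A - a • P).PosDef) (hb : (b • P - A).PosDef) {μ : ℝ}
    {v : ι → ℝ} (hv : v ≠ 0) (hμ : (P⁻¹ * A) *ᵥ v = μ • v) : μ ∈ Set.Ioo a b := by
  have hP : P.PosDef := by
    have hsum : (b - a)⁻¹ • ((A - a • P) + (b • P - A)) = P := by
      rw [show (A - a • P) + (b • P - A) = (b - a) • P by module,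
        inv_smul_smul₀ (sub_pos.2 hab).ne']
    exact hsum ▸ (ha.add hb).smul (inv_pos.2 (sub_pos.2 hab))
  have hAv : A *ᵥ v = μ • P *ᵥ v := by
    rw [← mulVec_smul, ← hμ, mulVec_mulVec,
      mul_nonsing_inv_cancel_left _ _ ((isUnit_iff_isUnit_det P).1 hP.isUnit)]
  have hvP : 0 < v ⬝ᵥ P *ᵥ v := by simpa using hP.dotProduct_mulVec_pos hv
  have hlower := dotProduct_mulVec_lt_of_posDef_sub ha hv
  have hupper := dotProduct_mulVec_lt_of_posDef_sub hb hv
  simp only [hAv, smul_mulVec, dotProduct_smul, smul_eq_mul] at hlower hupper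
  exact ⟨lt_of_mul_lt_mul_right hlower hvP.le, lt_of_mul_lt_mul_right hupper hvP.le⟩

lemma add_smul_le_smul {E : Type*} [AddCommGroup E] [PartialOrder E] [IsOrderedAddMonoid E]
    [Module ℝ E] [PosSMulMono ℝ E] {x y : E} {a c r : ℝ} (hc : 0 ≤ c) (hx : 0 ≤ x)
    (hy : y ≤ a • x) (hr : 1 + c * a ≤ r) : x + c • y ≤ r • x := by
  rw [← sub_nonneg]
  convert add_nonneg (smul_nonneg hc (sub_nonneg.2 hy)) (smul_nonneg (sub_nonneg.2 hr) hx) using 1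
  module

variable [DecidableEq ι]

lemma posDef_one_add_sub_smul_one_add {A P : Matrix ι ι ℝ} {r : ℝ} (hr : r < 1)
    (h : r • P ≤ A) : (1 + A - r • (1 + P)).PosDef := by
  rw [show 1 + A - r • (1 + P) = (1 - r) • (1 : Matrix ι ι ℝ) + (A - r • P) by module]
  exact (PosDef.one.smul (sub_pos.2 hr)).add_posSemidef (le_iff.1 h)

lemma posDef_smul_one_add_sub_one_add {A P : Matrix ι ι ℝ} {r : ℝ} (hr : 1 < r)
    (h : A ≤ r • P) : (r • (1 + P) - (1 + A)).PosDef := by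
  rw [show r • (1 + P) - (1 + A) = (r - 1) • (1 : Matrix ι ι ℝ) + (r • P - A) by module]
  exact (PosDef.one.smul (sub_pos.2 hr)).add_posSemidef (le_iff.1 h)

variable [DecidableEq κ]

/-- The weighted Kronecker sum `a (I ⊗ A) + b (B ⊗ I)`, through which one-dimensional operators
`A` and `B` act on the two directions of a tensor grid. -/
def kroneckerSum (a b : ℝ) (A : Matrix ι ι ℝ) (B : Matrix κ κ ℝ) :
    Matrix (κ × ι) (κ × ι) ℝ :=
  a • ((1 : Matrix κ κ ℝ) ⊗ₖ A) + b • (B ⊗ₖ (1 : Matrix ι ι ℝ))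

lemma kroneckerSum_smul (a b r : ℝ) (A : Matrix ι ι ℝ) (B : Matrix κ κ ℝ) :
    kroneckerSum a b (r • A) (r • B) = r • kroneckerSum a b A B := by
  rw [kroneckerSum, kroneckerSum, kronecker_smul, smul_kronecker]
  module

lemma kroneckerSum_mono [Finite ι] [Finite κ] {a b : ℝ} (ha : 0 ≤ a) (hb : 0 ≤ b)
    {A A' : Matrix ι ι ℝ} {B B' : Matrix κ κ ℝ} (hA : A ≤ A') (hB : B ≤ B') :
    kroneckerSum a b A B ≤ kroneckerSum a b A' B' := by
  have hsub : kroneckerSum a b A' B' - kroneckerSum a b A B =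
      kroneckerSum a b (A' - A) (B' - B) := by
    ext i j
    simp only [kroneckerSum, Matrix.add_apply, Matrix.sub_apply, Matrix.smul_apply, smul_eq_mul,
      kroneckerMap_apply]
    ring
  rw [le_iff, hsub]
  exact ((PosSemidef.one.kronecker (le_iff.1 hA)).smul ha).add
    (((le_iff.1 hB).kronecker PosSemidef.one).smul hb)

end PositiveSemidefinite

section Toeplitz

/-- The `n × n` Toeplitz matrix with `(i, j)` entry `g (i - j)`. -/
def toeplitz (n : ℕ) (g : ℤ → ℝ) : Matrix (Fin n) (Fin n) ℝ :=
  of fun i j => g (i - j)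

/-- The negative discrete Laplacian of a sequence: `triDiag` is its Dirichlet truncation. -/
def negLaplacian (g : ℤ → ℝ) (k : ℤ) : ℝ :=
  2 * g k - g (k + 1) - g (k - 1)

lemma toeplitz_single_zero_one (n : ℕ) : toeplitz n (Pi.single 0 1) = 1 := by
  ext i j
  simp only [toeplitz, of_apply, Pi.single_apply, one_apply, Fin.ext_iff, sub_eq_zero,
    Nat.cast_inj]

lemma triDiag_eq_toeplitz (n : ℕ) :
    triDiag n = toeplitz n (negLaplacian (Pi.single 0 1)) := by
  ext i j
  simp only [triDiag, toeplitz, of_apply, negLaplacian, Pi.single_apply]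
  split_ifs <;> first | omega | norm_num

-- The matrix is `Dᵀ * toeplitz (n + 1) g * D` for the bidiagonal `D`, with entries `1` and `e`.
lemma toeplitz_shift_nonneg {n : ℕ} {g : ℤ → ℝ} (hg : 0 ≤ toeplitz (n + 1) g) (e : ℝ) :
    0 ≤ toeplitz n fun k => (1 + e ^ 2) * g k + e * (g (k + 1) + g (k - 1)) := by
  let D : Matrix (Fin (n + 1)) (Fin n) ℝ :=
    of fun i j => (if i = j.succ then 1 else 0) + (if i = j.castSucc then e else 0)
  rw [nonneg_iff_posSemidef] at hg ⊢
  convert hg.conjTranspose_mul_mul_same D using 1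
  ext i j
  simp only [D, mul_apply, conjTranspose_apply, toeplitz, of_apply, star_trivial, add_mul,
    mul_add, ite_mul, mul_ite, zero_mul, mul_zero, one_mul, mul_one, sum_add_distrib,
    sum_ite_eq', mem_univ, if_true, Fin.val_succ, Fin.val_castSucc, Nat.cast_add, Nat.cast_one]
  rw [add_sub_add_right_eq_sub, add_sub_right_comm, ← sub_sub]
  ring

lemma toeplitz_negLaplacian_nonneg {n : ℕ} {g : ℤ → ℝ} (hg : 0 ≤ toeplitz (n + 1) g) :
    0 ≤ toeplitz n (negLaplacian g) := by
  convert toeplitz_shift_nonneg hg (-1) using 2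
  ext k
  rw [negLaplacian]
  ring

lemma toeplitz_negLaplacian_le {n : ℕ} {g : ℤ → ℝ} (hg : 0 ≤ toeplitz (n + 1) g) :
    toeplitz n (negLaplacian g) ≤ (4 : ℝ) • toeplitz n g := by
  rw [← sub_nonneg]
  convert toeplitz_shift_nonneg hg 1 using 1
  ext i j
  simp only [toeplitz, negLaplacian, Matrix.sub_apply, Matrix.smul_apply, of_apply, smul_eq_mul]
  ring

lemma triDiag_nonneg (n : ℕ) : 0 ≤ triDiag n := by
  rw [triDiag_eq_toeplitz]
  refine toeplitz_negLaplacian_nonneg ?_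
  rw [toeplitz_single_zero_one]
  exact PosSemidef.one.nonneg

lemma triDiag_le_four_smul_one (n : ℕ) :
    triDiag n ≤ (4 : ℝ) • (1 : Matrix (Fin n) (Fin n) ℝ) := by
  rw [triDiag_eq_toeplitz, ← toeplitz_single_zero_one n]
  refine toeplitz_negLaplacian_le ?_
  rw [toeplitz_single_zero_one]
  exact PosSemidef.one.nonneg

end Toeplitz

section Tau

/-- The sequence that agrees with `t` below `n` and vanishes from `n` on: the convention for the
entries of a first column that a matrix of size `n` does not see. -/
def truncate (n : ℕ) (t : ℕ → ℝ) (m : ℕ) : ℝ :=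
  if m < n then t m else 0

lemma truncate_of_lt {n m : ℕ} (h : m < n) (t : ℕ → ℝ) : truncate n t m = t m :=
  if_pos h

lemma truncate_of_le {n m : ℕ} (h : n ≤ m) (t : ℕ → ℝ) : truncate n t m = 0 :=
  if_neg h.not_gt

/-- The Hankel correction subtracted from a symmetric Toeplitz matrix to obtain its τ part. -/
def tauHankel (n : ℕ) (t : ℕ → ℝ) : Matrix (Fin n) (Fin n) ℝ :=
  of fun i j => truncate n t (i + j + 2) + truncate n t (2 * n - i - j)

lemma tauHankel_isSymm (n : ℕ) (t : ℕ → ℝ) : (tauHankel n t).IsSymm := by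
  ext i j
  simp only [tauHankel, transpose_apply, of_apply, add_comm (i : ℕ), Nat.sub_right_comm _ (i : ℕ)]

/-- The entries of `tauOf n t`, extended by the same formula to arbitrary (0-based) integer
indices, so that the boundary rows `-1` and `n` make sense. -/
def tauExt (n : ℕ) (t : ℕ → ℝ) (i j : ℤ) : ℝ :=
  truncate n t (i - j).natAbs - truncate n t (i + j + 2).natAbs -
    truncate n t (2 * n - i - j).natAbs

lemma tauOf_apply (n : ℕ) (t : ℕ → ℝ) (i j : Fin n) : tauOf n t i j = tauExt n t i j := by
  have hplus : (i : ℕ) + 1 + (j + 1) = ((i : ℤ) + j + 2).natAbs := by omega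
  have hminus : 2 * (n + 1) - ((i : ℕ) + 1) - (j + 1) = (2 * (n : ℤ) - i - j).natAbs := by omega
  simp only [tauOf, tauExt, truncate, hplus, hminus]

lemma tauExt_comm (n : ℕ) (t : ℕ → ℝ) (i j : ℤ) : tauExt n t i j = tauExt n t j i := by
  rw [tauExt, tauExt, ← Int.natAbs_neg (i - j), neg_sub, add_comm i, sub_right_comm _ i]

lemma tauExt_neg_one {n : ℕ} (t : ℕ → ℝ) (j : Fin n) : tauExt n t (-1) j = 0 := by
  rw [tauExt, truncate_of_le (m := (2 * (n : ℤ) - -1 - j).natAbs) (by omega),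
    show ((-1 : ℤ) - j).natAbs = (-1 + (j : ℤ) + 2).natAbs by omega]
  ring

lemma tauExt_self {n : ℕ} (t : ℕ → ℝ) (j : Fin n) : tauExt n t n j = 0 := by
  rw [tauExt, truncate_of_le (m := ((n : ℤ) + j + 2).natAbs) (by omega),
    show (2 * (n : ℤ) - n - j).natAbs = ((n : ℤ) - j).natAbs by omega]
  ring

-- Each summand of `tauExt n t i j` depends on `i - j` or on `i + j` only, hence solves the
-- discrete wave equation.
lemma negLaplacian_tauExt_comm (n : ℕ) (t : ℕ → ℝ) (i j : ℤ) :
    negLaplacian (tauExt n t · j) i = negLaplacian (tauExt n t · i) j := by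
  simp only [negLaplacian]
  rw [tauExt_comm n t j i]
  simp only [tauExt]
  rw [show (j - 1 - i).natAbs = (i + 1 - j).natAbs by omega,
    show (j + 1 - i).natAbs = (i - 1 - j).natAbs by omega,
    show j - 1 + i = i - 1 + j by ring, show j + 1 + i = i + 1 + j by ring,
    show 2 * (n : ℤ) - (j - 1) - i = 2 * n - (i - 1) - j by ring,
    show 2 * (n : ℤ) - (j + 1) - i = 2 * n - (i + 1) - j by ring]
  ring

lemma sum_fin_ite_intCast_eq {n : ℕ} {f : ℤ → ℝ} (hleft : f (-1) = 0) (hright : f n = 0) {m : ℤ}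
    (hm : m ∈ Set.Icc (-1) (n : ℤ)) : ∑ k : Fin n, (if (k : ℤ) = m then f k else 0) = f m := by
  obtain hm' | ⟨p, rfl⟩ : (m = -1 ∨ m = n) ∨ ∃ p : Fin n, m = p := by
    by_cases h : 0 ≤ m ∧ m < n
    · exact .inr ⟨⟨m.toNat, by omega⟩, by simp [h.1]⟩
    · exact .inl (by have := hm.1; have := hm.2; omega)
  · rw [show f m = 0 by rcases hm' with rfl | rfl <;> assumption]
    exact sum_eq_zero fun k _ => if_neg (by omega)
  · simp [← Fin.ext_iff]

lemma triDiag_mulVec_apply {n : ℕ} {f : ℤ → ℝ} (hleft : f (-1) = 0) (hright : f n = 0)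
    (i : Fin n) : (triDiag n *ᵥ fun k => f k) i = negLaplacian f i := by
  rw [negLaplacian, ← sum_fin_ite_intCast_eq hleft hright (m := i) ⟨by omega, by omega⟩,
    ← sum_fin_ite_intCast_eq hleft hright (m := i + 1) ⟨by omega, by omega⟩,
    ← sum_fin_ite_intCast_eq hleft hright (m := i - 1) ⟨by omega, by omega⟩,
    mul_sum, ← sum_sub_distrib, ← sum_sub_distrib, mulVec, dotProduct]
  refine sum_congr rfl fun k _ => ?_
  unfold triDiag
  split_ifs <;> first | omega | ring

lemma triDiag_isSymm (n : ℕ) : (triDiag n).IsSymm := by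
  ext i j
  simp only [triDiag, transpose_apply]
  split_ifs <;> first | omega | rfl

lemma tauOf_isSymm (n : ℕ) (t : ℕ → ℝ) : (tauOf n t).IsSymm := by
  ext i j
  rw [transpose_apply, tauOf_apply, tauOf_apply, tauExt_comm]

lemma triDiag_mul_tauOf_apply (n : ℕ) (t : ℕ → ℝ) (i j : Fin n) :
    (triDiag n * tauOf n t) i j = negLaplacian (tauExt n t · j) i := by
  rw [← triDiag_mulVec_apply (f := (tauExt n t · j)) (tauExt_neg_one t j) (tauExt_self t j),
    mul_apply, mulVec, dotProduct]
  simp only [tauOf_apply]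

lemma commute_triDiag_tauOf (n : ℕ) (t : ℕ → ℝ) : Commute (triDiag n) (tauOf n t) :=
  calc triDiag n * tauOf n t = (triDiag n * tauOf n t)ᵀ := by
        ext i j
        rw [transpose_apply, triDiag_mul_tauOf_apply, triDiag_mul_tauOf_apply,
          negLaplacian_tauExt_comm]
    _ = tauOf n t * triDiag n := by
        rw [transpose_mul, (tauOf_isSymm n t).eq, (triDiag_isSymm n).eq]

end Tau

section RowSums

lemma sum_range_truncate {n m : ℕ} (h : n ≤ m) (t : ℕ → ℝ) :
    ∑ k ∈ range m, truncate n t k = ∑ k ∈ range n, t k := by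
  rw [← sum_subset (range_mono h) fun k _ hk => truncate_of_le (by simpa using hk) t]
  exact sum_congr rfl fun k hk => truncate_of_lt (mem_range.1 hk) t

lemma sum_range_natAbs_sub (f : ℕ → ℝ) {n i : ℕ} (hi : i < n) :
    ∑ j ∈ range n, f ((i : ℤ) - j).natAbs =
      ∑ m ∈ range (i + 1), f m + ∑ m ∈ range (n - i), f m - f 0 := by
  obtain ⟨k, rfl⟩ : ∃ k, n = i + 1 + k := ⟨n - (i + 1), by omega⟩
  rw [show i + 1 + k - i = k + 1 by omega, sum_range_add, sum_range_succ' _ k,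
    ← sum_range_reflect f (i + 1)]
  have hbelow : ∑ j ∈ range (i + 1), f ((i : ℤ) - j).natAbs =
      ∑ j ∈ range (i + 1), f (i + 1 - 1 - j) :=
    sum_congr rfl fun j hj => by
      have := mem_range.1 hj
      congr 1
      omega
  have habove : ∑ j ∈ range k, f ((i : ℤ) - (i + 1 + j : ℕ)).natAbs = ∑ j ∈ range k, f (j + 1) :=
    sum_congr rfl fun j _ => by congr 1; omega
  rw [hbelow, habove]
  ring

lemma sum_tauHankel_row (n : ℕ) (t : ℕ → ℝ) (i : Fin n) :
    ∑ j, tauHankel n t i j = 2 * ∑ m ∈ range n, t m -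
      ∑ m ∈ range (i + 2), truncate n t m - ∑ m ∈ range (n - i + 1), truncate n t m := by
  have hlow := sum_range_add (truncate n t) (i + 2) n
  have hhigh := sum_range_add (truncate n t) (n - i + 1) n
  rw [sum_range_truncate (by omega)] at hlow hhigh
  have hreflect : ∑ j ∈ range n, truncate n t (2 * n - i - j) =
      ∑ j ∈ range n, truncate n t (n - i + 1 + j) := by
    rw [← sum_range_reflect]
    refine sum_congr rfl fun j hj => ?_
    have := mem_range.1 hj
    congr 1
    omega
  simp only [tauHankel, of_apply, sum_add_distrib]
  rw [Fin.sum_univ_eq_sum_range (fun j => truncate n t (i + j + 2)) n,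
    Fin.sum_univ_eq_sum_range (fun j => truncate n t (2 * n - i - j)) n, hreflect]
  simp only [add_right_comm (i : ℕ) _ 2]
  linear_combination -hlow - hhigh

end RowSums

/-- The sign pattern of the Fourier coefficients of a fractional Laplacian: even, nonpositive and
increasing to the right of `0`, with nonnegative symmetric partial sums. -/
structure IsLaplacianSymbol (g : ℤ → ℝ) : Prop where
  even : Function.Even g
  nonpos : ∀ m : ℕ, 1 ≤ m → g m ≤ 0
  monotoneOn : MonotoneOn (fun m : ℕ => g m) (Set.Ici 1)
  sum_nonneg : ∀ n : ℕ, 0 ≤ g 0 + 2 * ∑ m ∈ range n, g (m + 1 : ℕ)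

namespace IsLaplacianSymbol

variable {g : ℤ → ℝ} (hg : IsLaplacianSymbol g)
include hg

lemma apply_natAbs (k : ℤ) : g k.natAbs = g k := by
  obtain h | h := Int.natAbs_eq k
  · rw [← h]
  · rw [← hg.even, ← h]

lemma truncate_nonpos {m : ℕ} (hm : 1 ≤ m) (n : ℕ) : truncate n (fun m => g m) m ≤ 0 := by
  unfold truncate
  split_ifs
  exacts [hg.nonpos m hm, le_rfl]

lemma truncate_natAbs_sub {n : ℕ} (i j : Fin n) :
    truncate n (fun m => g m) ((i : ℤ) - j).natAbs = toeplitz n g i j := by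
  rw [truncate_of_lt (by omega), hg.apply_natAbs, toeplitz, of_apply]

lemma toeplitz_isSymm (n : ℕ) : (toeplitz n g).IsSymm := by
  ext i j
  rw [transpose_apply, toeplitz, of_apply, of_apply, ← hg.even, neg_sub]

lemma tauOf_eq_toeplitz_sub_tauHankel (n : ℕ) :
    tauOf n (fun m => g m) = toeplitz n g - tauHankel n fun m => g m := by
  ext i j
  rw [tauOf_apply, tauExt, hg.truncate_natAbs_sub, Matrix.sub_apply, tauHankel, of_apply,
    show ((i : ℤ) + j + 2).natAbs = (i : ℕ) + j + 2 by omega,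
    show (2 * (n : ℤ) - i - j).natAbs = 2 * n - i - j by omega]
  ring

lemma tauHankel_nonpos {n : ℕ} (i j : Fin n) : tauHankel n (fun m => g m) i j ≤ 0 :=
  add_nonpos (hg.truncate_nonpos (by omega) n) (hg.truncate_nonpos (by omega) n)

-- At most one of the two Hankel terms survives the truncation, and its index is at least
-- `|i - j|`.
lemma toeplitz_le_tauHankel {n : ℕ} {i j : Fin n} (hij : i ≠ j) :
    toeplitz n g i j ≤ tauHankel n (fun m => g m) i j := by
  have hne : (i : ℕ) ≠ j := Fin.val_ne_of_ne hij
  rw [toeplitz, of_apply, ← hg.apply_natAbs, tauHankel, of_apply]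
  obtain hlow | hlow := lt_or_ge ((i : ℕ) + j + 2) n
  · rw [truncate_of_lt hlow, truncate_of_le (by omega), add_zero]
    exact hg.monotoneOn (Set.mem_Ici.2 (by omega)) (Set.mem_Ici.2 (by omega)) (by omega)
  · rw [truncate_of_le hlow, zero_add]
    obtain hhigh | hhigh := lt_or_ge (2 * n - (i : ℕ) - j) n
    · rw [truncate_of_lt hhigh]
      exact hg.monotoneOn (Set.mem_Ici.2 (by omega)) (Set.mem_Ici.2 (by omega)) (by omega)
    · rw [truncate_of_le hhigh]
      exact hg.nonpos _ (by omega)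

lemma sum_toeplitz_row {n : ℕ} (i : Fin n) :
    ∑ j, toeplitz n g i j = ∑ m ∈ range (i + 1), truncate n (fun m => g m) m +
      ∑ m ∈ range (n - i), truncate n (fun m => g m) m - g 0 := by
  simp only [← hg.truncate_natAbs_sub]
  rw [Fin.sum_univ_eq_sum_range (fun j => truncate n (fun m => g m) ((i : ℤ) - j).natAbs) n,
    sum_range_natAbs_sub _ i.2, truncate_of_lt i.pos, Nat.cast_zero]

-- Up to the two missing nonpositive entries of index `i + 1` and `n - i`, the Toeplitz and
-- Hankel entries of a row run exactly once over the coefficients of index `-n < k < n`.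
lemma sum_toeplitz_add_tauHankel_row_nonneg {n : ℕ} (i : Fin n) :
    0 ≤ ∑ j, (toeplitz n g i j + tauHankel n (fun m => g m) i j) := by
  have htotal : 0 ≤ 2 * ∑ m ∈ range n, g m - g 0 := by
    obtain ⟨k, rfl⟩ := Nat.exists_eq_add_one.2 i.pos
    have hk := hg.sum_nonneg k
    rw [sum_range_succ', Nat.cast_zero]
    linarith
  have hlow := hg.truncate_nonpos (m := i + 1) (by omega) n
  have hhigh := hg.truncate_nonpos (m := n - i) (by omega) n
  rw [sum_add_distrib, hg.sum_toeplitz_row, sum_tauHankel_row, sum_range_succ _ (i + 1),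
    sum_range_succ _ (n - i)]
  linarith

-- The range of `c` is the one in which `|T + c H| ≤ -(T + H)` off the diagonal, given that
-- `T ≤ H ≤ 0` there.
lemma toeplitz_add_smul_tauHankel_nonneg (n : ℕ) {c : ℝ} (hc : c ∈ Set.Icc (-3) 1) :
    0 ≤ toeplitz n g + c • tauHankel n fun m => g m := by
  rw [nonneg_iff_posSemidef]
  refine posSemidef_of_sum_norm_le_re_diag
    ((hg.toeplitz_isSymm n).add ((tauHankel_isSymm n _).smul c)) fun i => ?_
  simp only [Matrix.add_apply, Matrix.smul_apply, smul_eq_mul, Real.norm_eq_abs, RCLike.re_to_real]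
  have hoff : ∀ j ∈ univ.erase i, |toeplitz n g i j + c * tauHankel n (fun m => g m) i j| ≤
      -(toeplitz n g i j + tauHankel n (fun m => g m) i j) := fun j hj => by
    have hTH := hg.toeplitz_le_tauHankel (ne_of_mem_erase hj).symm
    have hH := hg.tauHankel_nonpos i j
    rw [abs_le]
    constructor <;> nlinarith [hc.1, hc.2]
  have hdiag := mul_le_mul_of_nonpos_right hc.2 (hg.tauHankel_nonpos i i)
  have hrow := hg.sum_toeplitz_add_tauHankel_row_nonneg i
  rw [← add_sum_erase _ _ (mem_univ i)] at hrow
  refine (sum_le_sum hoff).trans ?_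
  rw [sum_neg_distrib]
  linarith

lemma toeplitz_nonneg (n : ℕ) : 0 ≤ toeplitz n g := by
  simpa using hg.toeplitz_add_smul_tauHankel_nonneg n (c := 0) (by norm_num)

lemma tauOf_nonneg (n : ℕ) : 0 ≤ tauOf n fun m => g m := by
  rw [hg.tauOf_eq_toeplitz_sub_tauHankel, sub_eq_add_neg, ← neg_one_smul ℝ]
  exact hg.toeplitz_add_smul_tauHankel_nonneg n (by norm_num)

lemma triDiag_mul_tauOf_nonneg (n : ℕ) : 0 ≤ triDiag n * tauOf n fun m => g m :=
  Commute.mul_nonneg (triDiag_nonneg n) (hg.tauOf_nonneg n) (commute_triDiag_tauOf n _)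

lemma triDiag_mul_tauOf_le (n : ℕ) :
    triDiag n * tauOf n (fun m => g m) ≤ (4 : ℝ) • tauOf n fun m => g m := by
  have hcomm : Commute ((4 : ℝ) • 1 - triDiag n) (tauOf n fun m => g m) :=
    ((Commute.one_left _).smul_left _).sub_left (commute_triDiag_tauOf n _)
  have hmul := hcomm.mul_nonneg (sub_nonneg.2 (triDiag_le_four_smul_one n)) (hg.tauOf_nonneg n)
  rwa [sub_mul, smul_mul_assoc, one_mul, sub_nonneg] at hmul

lemma tauOf_le_two_smul_toeplitz (n : ℕ) : tauOf n (fun m => g m) ≤ (2 : ℝ) • toeplitz n g := by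
  rw [← sub_nonneg, hg.tauOf_eq_toeplitz_sub_tauHankel]
  convert hg.toeplitz_add_smul_tauHankel_nonneg n (c := 1) (by norm_num) using 1
  module

lemma two_smul_toeplitz_le_three_smul_tauOf (n : ℕ) :
    (2 : ℝ) • toeplitz n g ≤ (3 : ℝ) • tauOf n fun m => g m := by
  rw [← sub_nonneg, hg.tauOf_eq_toeplitz_sub_tauHankel]
  convert hg.toeplitz_add_smul_tauHankel_nonneg n (c := -3) (by norm_num) using 1
  module

variable {c : ℝ} (hc : c ∈ Set.Icc 0 (1 / 12))
include hc

lemma smul_one_add_triDiag_mul_tauOf_le (n : ℕ) :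
    (3 / 8 : ℝ) • ((1 + c • triDiag n) * tauOf n fun m => g m) ≤
      toeplitz n (g + c • negLaplacian g) := by
  have hP : (1 + c • triDiag n) * tauOf n (fun m => g m) ≤
      (4 / 3 : ℝ) • tauOf n fun m => g m := by
    rw [one_add_mul, smul_mul_assoc]
    exact add_smul_le_smul hc.1 (hg.tauOf_nonneg n) (hg.triDiag_mul_tauOf_le n)
      (by linarith [hc.2])
  calc (3 / 8 : ℝ) • ((1 + c • triDiag n) * tauOf n fun m => g m)
      ≤ (3 / 8 : ℝ) • (4 / 3 : ℝ) • tauOf n fun m => g m :=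
        smul_le_smul_of_nonneg_left hP (by norm_num)
    _ = (1 / 2 : ℝ) • tauOf n fun m => g m := by module
    _ ≤ (1 / 2 : ℝ) • (2 : ℝ) • toeplitz n g :=
        smul_le_smul_of_nonneg_left (hg.tauOf_le_two_smul_toeplitz n) (by norm_num)
    _ = toeplitz n g := by module
    _ ≤ toeplitz n (g + c • negLaplacian g) :=
        le_add_of_nonneg_right <|
          smul_nonneg hc.1 (toeplitz_negLaplacian_nonneg (hg.toeplitz_nonneg (n + 1)))

lemma toeplitz_add_smul_negLaplacian_le (n : ℕ) :
    toeplitz n (g + c • negLaplacian g) ≤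
      (2 : ℝ) • ((1 + c • triDiag n) * tauOf n fun m => g m) := by
  have hP : tauOf n (fun m => g m) ≤ (1 + c • triDiag n) * tauOf n fun m => g m := by
    rw [one_add_mul, smul_mul_assoc]
    exact le_add_of_nonneg_right (smul_nonneg hc.1 (hg.triDiag_mul_tauOf_nonneg n))
  calc toeplitz n (g + c • negLaplacian g)
      ≤ (4 / 3 : ℝ) • toeplitz n g :=
        add_smul_le_smul hc.1 (hg.toeplitz_nonneg n)
          (toeplitz_negLaplacian_le (hg.toeplitz_nonneg (n + 1))) (by linarith [hc.2])
    _ = (2 / 3 : ℝ) • (2 : ℝ) • toeplitz n g := by module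
    _ ≤ (2 / 3 : ℝ) • (3 : ℝ) • tauOf n fun m => g m :=
        smul_le_smul_of_nonneg_left (hg.two_smul_toeplitz_le_three_smul_tauOf n) (by norm_num)
    _ = (2 : ℝ) • tauOf n fun m => g m := by module
    _ ≤ (2 : ℝ) • ((1 + c • triDiag n) * tauOf n fun m => g m) :=
        smul_le_smul_of_nonneg_left hP zero_le_two

end IsLaplacianSymbol

section FractionalCoefficients

-- At `s = 0` both sides vanish, since `Γ 0 = 0` in Mathlib.
lemma inv_Gamma_eq_self_mul_inv_Gamma_add_one (s : ℝ) :
    (Real.Gamma s)⁻¹ = s * (Real.Gamma (s + 1))⁻¹ := by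
  obtain rfl | hs := eq_or_ne s 0
  · simp
  · rw [Real.Gamma_add_one hs, mul_inv, mul_inv_cancel_left₀ hs]

variable (γ : ℝ)

lemma gCoef_even : Function.Even (gCoef γ) := fun k => by
  simp only [gCoef, Int.cast_neg, sub_neg_eq_add, ← sub_eq_add_neg, _root_.zpow_neg,
    ← _root_.inv_zpow, inv_neg, inv_one, mul_comm (Real.Gamma (γ / 2 + k + 1))]

lemma add_one_mul_gCoef_add_one (k : ℤ) :
    (γ / 2 + k + 1) * gCoef γ (k + 1) = (k - γ / 2) * gCoef γ k := by
  have hplus := inv_Gamma_eq_self_mul_inv_Gamma_add_one (γ / 2 + k + 1)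
  have hminus := inv_Gamma_eq_self_mul_inv_Gamma_add_one (γ / 2 - k)
  simp only [gCoef, div_eq_mul_inv _ (_ * _), mul_inv, Int.cast_add, Int.cast_one]
  rw [zpow_add_one₀ (by norm_num), hplus, show γ / 2 - (k + 1) + 1 = γ / 2 - k by ring, hminus,
    ← add_assoc]
  ring

lemma mul_gCoef_zero_add_two_mul_sum (n : ℕ) :
    γ * (gCoef γ 0 + 2 * ∑ m ∈ range n, gCoef γ (m + 1 : ℕ)) =
      -(2 * n + 2 + γ) * gCoef γ (n + 1 : ℕ) := by
  induction n with
  | zero =>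
    have hrec := add_one_mul_gCoef_add_one γ 0
    push_cast at hrec ⊢
    simp only [range_zero, sum_empty]
    linear_combination 2 * hrec
  | succ n ih =>
    have hrec := add_one_mul_gCoef_add_one γ (n + 1 : ℕ)
    rw [sum_range_succ]
    push_cast at hrec ih ⊢
    linear_combination ih + 2 * hrec

variable {γ}

lemma gCoef_zero_pos (hγ : -1 < γ) : 0 < gCoef γ 0 := by
  have hnum := Real.Gamma_pos_of_pos (show 0 < γ + 1 by linarith)
  have hden := Real.Gamma_pos_of_pos (show 0 < γ / 2 + 1 by linarith)
  simp only [gCoef, zpow_zero, one_mul, Int.cast_zero, sub_zero, add_zero]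
  positivity

lemma gCoef_natCast_nonpos (hγ : γ ∈ Set.Icc 0 2) {m : ℕ} (hm : 1 ≤ m) : gCoef γ m ≤ 0 := by
  obtain ⟨hγ0, hγ2⟩ := hγ
  induction m, hm using Nat.le_induction with
  | base =>
    have hrec := add_one_mul_gCoef_add_one γ 0
    have hpos := gCoef_zero_pos (show -1 < γ by linarith)
    push_cast at hrec ⊢
    nlinarith
  | succ m hm ih =>
    have hrec := add_one_mul_gCoef_add_one γ m
    have hm' : (1 : ℝ) ≤ m := by exact_mod_cast hm
    push_cast at hrec ⊢
    nlinarith [mul_nonpos_of_nonneg_of_nonpos (show 0 ≤ m - γ / 2 by linarith) ih]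

lemma monotoneOn_gCoef_natCast (hγ : γ ∈ Set.Icc 0 2) :
    MonotoneOn (fun m : ℕ => gCoef γ m) (Set.Ici 1) := by
  refine monotoneOn_nat_Ici_of_le_succ fun m hm => ?_
  have hrec := add_one_mul_gCoef_add_one γ m
  have hneg := mul_nonpos_of_nonneg_of_nonpos (show 0 ≤ γ + 1 by linarith [hγ.1])
    (gCoef_natCast_nonpos hγ hm)
  push_cast at hrec ⊢
  have hpos : 0 < γ / 2 + m + 1 := by linarith [hγ.1, m.cast_nonneg (α := ℝ)]
  refine le_of_mul_le_mul_left ?_ hpos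
  linarith

lemma isLaplacianSymbol_gCoef (hγ : γ ∈ Set.Ioc 0 2) : IsLaplacianSymbol (gCoef γ) where
  even := gCoef_even γ
  nonpos _ := gCoef_natCast_nonpos (Set.Ioc_subset_Icc_self hγ)
  monotoneOn := monotoneOn_gCoef_natCast (Set.Ioc_subset_Icc_self hγ)
  sum_nonneg n := by
    have hneg := gCoef_natCast_nonpos (Set.Ioc_subset_Icc_self hγ) (Nat.le_add_left 1 n)
    refine nonneg_of_mul_nonneg_right ?_ hγ.1
    rw [mul_gCoef_zero_add_two_mul_sum]
    exact mul_nonneg_of_nonpos_of_nonpos (by linarith [hγ.1, n.cast_nonneg (α := ℝ)]) hneg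

lemma add_two_mul_intCast_ne_zero (hγ : γ ∈ Set.Ioo 0 2) (k : ℤ) : γ + 2 * k ≠ 0 := by
  intro h
  have hlow : (-1 : ℝ) < k := by linarith [hγ.2]
  have hhigh : (k : ℝ) < 0 := by linarith [hγ.1]
  norm_cast at hlow hhigh
  omega

lemma sCoef_eq_gCoef_add_smul_negLaplacian (hγ : γ ∈ Set.Ioo 0 2) :
    sCoef γ = gCoef γ + (γ / 24) • negLaplacian (gCoef γ) := by
  ext k
  have hplus : γ + 2 * k + 2 ≠ 0 := by
    have := add_two_mul_intCast_ne_zero hγ (k + 1)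
    push_cast at this
    rwa [mul_add_one, ← add_assoc] at this
  have hminus : γ - 2 * k + 2 ≠ 0 := by
    have := add_two_mul_intCast_ne_zero hγ (1 - k)
    push_cast at this
    convert this using 1
    ring
  have hnext := add_one_mul_gCoef_add_one γ k
  have hprev := add_one_mul_gCoef_add_one γ (k - 1)
  push_cast at hprev
  have hnext' : gCoef γ (k + 1) = (2 * k - γ) * gCoef γ k / (γ + 2 * k + 2) := by
    rw [eq_div_iff hplus]
    linear_combination 2 * hnext
  have hprev' : gCoef γ (k - 1) = -(γ + 2 * k) * gCoef γ k / (γ - 2 * k + 2) := by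
    rw [eq_div_iff hminus]
    rw [sub_add_cancel] at hprev
    linear_combination 2 * hprev
  have hs : sCoef γ k =
    gCoef γ k * (1 + γ * (γ + 1) * (γ + 2) / (6 * (γ - 2 * k + 2) * (γ + 2 * k + 2))) := rfl
  rw [hs, Pi.add_apply, Pi.smul_apply, negLaplacian, smul_eq_mul, hnext', hprev']
  field_simp
  ring

lemma smul_Pmat_le_Amat (hγ : γ ∈ Set.Ioo 0 2) (n : ℕ) : (3 / 8 : ℝ) • Pmat γ n ≤ Amat γ n := by
  rw [show Amat γ n = toeplitz n (sCoef γ) from rfl, sCoef_eq_gCoef_add_smul_negLaplacian hγ]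
  exact (isLaplacianSymbol_gCoef (Set.Ioo_subset_Ioc_self hγ)).smul_one_add_triDiag_mul_tauOf_le
    ⟨by linarith [hγ.1], by linarith [hγ.2]⟩ n

lemma Amat_le_smul_Pmat (hγ : γ ∈ Set.Ioo 0 2) (n : ℕ) : Amat γ n ≤ (2 : ℝ) • Pmat γ n := by
  rw [show Amat γ n = toeplitz n (sCoef γ) from rfl, sCoef_eq_gCoef_add_smul_negLaplacian hγ]
  exact (isLaplacianSymbol_gCoef (Set.Ioo_subset_Ioc_self hγ)).toeplitz_add_smul_negLaplacian_le
    ⟨by linarith [hγ.1], by linarith [hγ.2]⟩ n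

end FractionalCoefficients

theorem stmt_18_general (α β : ℝ) (hα : α ∈ Set.Ioo (0 : ℝ) 2) (hβ : β ∈ Set.Ioo (0 : ℝ) 2)
    (Nx Ny : ℕ) (ηα ηβ : ℝ) (hηα : 0 ≤ ηα) (hηβ : 0 ≤ ηβ) :
    ∀ J Pτ : Matrix (Fin Ny × Fin Nx) (Fin Ny × Fin Nx) ℝ,
      J = ηα • ((1 : Matrix (Fin Ny) (Fin Ny) ℝ) ⊗ₖ Amat α Nx) +
            ηβ • (Amat β Ny ⊗ₖ (1 : Matrix (Fin Nx) (Fin Nx) ℝ)) →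
      Pτ = 1 + ηα • ((1 : Matrix (Fin Ny) (Fin Ny) ℝ) ⊗ₖ Pmat α Nx) +
             ηβ • (Pmat β Ny ⊗ₖ (1 : Matrix (Fin Nx) (Fin Nx) ℝ)) →
      (∀ v : Fin Ny × Fin Nx → ℝ, v ≠ 0 →
        (3 / 8) * (v ⬝ᵥ Pτ *ᵥ v) < v ⬝ᵥ (1 + J) *ᵥ v ∧
        v ⬝ᵥ (1 + J) *ᵥ v < 2 * (v ⬝ᵥ Pτ *ᵥ v)) ∧
      (∀ (μ : ℝ) (v : Fin Ny × Fin Nx → ℝ), v ≠ 0 →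
        (Pτ⁻¹ * (1 + J)) *ᵥ v = μ • v → 3 / 8 < μ ∧ μ < 2) := by
  intro J Pτ hJ hPτ
  replace hJ : J = kroneckerSum ηα ηβ (Amat α Nx) (Amat β Ny) := hJ
  replace hPτ : Pτ = 1 + kroneckerSum ηα ηβ (Pmat α Nx) (Pmat β Ny) := hPτ.trans (add_assoc ..)
  have hlower : ((1 + J) - (3 / 8 : ℝ) • Pτ).PosDef := by
    rw [hJ, hPτ]
    refine posDef_one_add_sub_smul_one_add (by norm_num) ?_
    rw [← kroneckerSum_smul]
    exact kroneckerSum_mono hηα hηβ (smul_Pmat_le_Amat hα Nx) (smul_Pmat_le_Amat hβ Ny)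
  have hupper : ((2 : ℝ) • Pτ - (1 + J)).PosDef := by
    rw [hJ, hPτ]
    refine posDef_smul_one_add_sub_one_add (by norm_num) ?_
    rw [← kroneckerSum_smul]
    exact kroneckerSum_mono hηα hηβ (Amat_le_smul_Pmat hα Nx) (Amat_le_smul_Pmat hβ Ny)
  refine ⟨fun v hv => ?_, fun μ v hv hμ =>
    mem_Ioo_of_inv_mul_mulVec_eq_smul (by norm_num) hlower hupper hv hμ⟩
  simpa only [smul_mulVec, dotProduct_smul, smul_eq_mul] using
    And.intro (dotProduct_mulVec_lt_of_posDef_sub hlower hv)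
      (dotProduct_mulVec_lt_of_posDef_sub hupper hv)

theorem stmt_18 (α β : ℝ) (hα : α ∈ Set.Ioo (1 : ℝ) 2) (hβ : β ∈ Set.Ioo (1 : ℝ) 2)
    (Nx Ny : ℕ) (hNx : 1 ≤ Nx) (hNy : 1 ≤ Ny)
    (ηα ηβ : ℝ) (hηα : 0 < ηα) (hηβ : 0 < ηβ) :
    ∀ J Pτ : Matrix (Fin Ny × Fin Nx) (Fin Ny × Fin Nx) ℝ,
      J = ηα • ((1 : Matrix (Fin Ny) (Fin Ny) ℝ) ⊗ₖ Amat α Nx) +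
            ηβ • (Amat β Ny ⊗ₖ (1 : Matrix (Fin Nx) (Fin Nx) ℝ)) →
      Pτ = 1 + ηα • ((1 : Matrix (Fin Ny) (Fin Ny) ℝ) ⊗ₖ Pmat α Nx) +
             ηβ • (Pmat β Ny ⊗ₖ (1 : Matrix (Fin Nx) (Fin Nx) ℝ)) →
      (∀ v : Fin Ny × Fin Nx → ℝ, v ≠ 0 →
        (3 / 8) * (v ⬝ᵥ Pτ *ᵥ v) < v ⬝ᵥ (1 + J) *ᵥ v ∧
        v ⬝ᵥ (1 + J) *ᵥ v < 2 * (v ⬝ᵥ Pτ *ᵥ v)) ∧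
      (∀ (μ : ℝ) (v : Fin Ny × Fin Nx → ℝ), v ≠ 0 →
        (Pτ⁻¹ * (1 + J)) *ᵥ v = μ • v → 3 / 8 < μ ∧ μ < 2) := by
  exact stmt_18_general α β ⟨one_pos.trans hα.1, hα.2⟩ ⟨one_pos.trans hβ.1, hβ.2⟩ Nx Ny ηα ηβ
    hηα.le hηβ.le
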